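/- Let n, d, s be positive integers with d ≤ n, let f_1,…,f_s ∈ ℝ[X_1,…,X_n] be symmetric polynomials of total degree at most d, and let S = {x ∈ ℝⁿ : f_1(x) ≥ 0, …, f_s(x) ≥ 0}. If x ∈ S ∩ W_c and z ∈ W_c satisfy p_j(z) = p_j(x) for all j = 1,…,d, then x and z lie in the same connected component of S. -/

import Mathlib

/-!
Symmetric polynomials of degree at most `d` are functions of the power sums `p_1, …, p_d`, so it
suffices to connect the points of `W_c` with prescribed `p_1, …, p_d`. For `d ≥ 2` they form a
compact set `F`, and a compact set is connected once some continuous function has at most one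
local minimizer on it. The function used here is `p_{d+1}`.

Let `x ≠ y` in `F` with `p_{d+1}(y) ≤ p_{d+1}(x)`. Then `∑ i, ∫ t in x i..y i, g t ≤ 0` for every
monic `g` of degree at most `d`, so no such `g` can have the sign of `y i - x i` between `x i` and
`y i` for all `i`. This forces `y - x` to alternate in sign along some indices
`s 0 > s 1 > ⋯ > s d`, starting with `y (s 0) < x (s 0)`: otherwise one could place a root of `g`
at each sign change. The product `∏ j, (X - x (s j))` vanishes at every `x (s j)` and is negative
at `y (s j)` for even `j`, so it stays real-rooted when a small `ε > 0` is added to it. Replacing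
the factor `∏ j, (X - x (s j))` of `∏ i, (X - x i)` by its perturbation gives a point of `F` near
`x` at which `p_{d+1}` has dropped by `(d + 1) ε`, so `x` is not a local minimizer.
-/

section SymmetricPolynomials

open MvPolynomial

variable {σ τ R : Type*} [CommRing R]

lemma isHomogeneous_aeval_monomial {φ : τ → MvPolynomial σ R} {w : τ → ℕ}
    (hφ : ∀ i, (φ i).IsHomogeneous (w i)) (t : τ →₀ ℕ) (c : R) :
    (aeval φ (monomial t c)).IsHomogeneous (Finsupp.weight w t) := by
  rw [aeval_monomial, algebraMap_eq, Finsupp.weight_apply, ← zero_add (Finsupp.sum _ _)]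
  refine (isHomogeneous_C σ c).mul (IsHomogeneous.prod _ _ _ fun i _ => ?_)
  simpa only [smul_eq_mul, mul_comm] using (hφ i).pow (t i)

lemma homogeneousComponent_aeval {φ : τ → MvPolynomial σ R} {w : τ → ℕ}
    (hφ : ∀ i, (φ i).IsHomogeneous (w i)) (m : ℕ) (g : MvPolynomial τ R) :
    homogeneousComponent m (aeval φ g) = aeval φ (weightedHomogeneousComponent w m g) := by
  induction g using MvPolynomial.induction_on' with
  | monomial t c =>
    rw [homogeneousComponent_of_mem (isHomogeneous_aeval_monomial hφ t c),
      weightedHomogeneousComponent_of_mem (isWeightedHomogeneous_monomial w t c rfl),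
      apply_ite (aeval φ), map_zero]
  | add p q hp hq => simp only [map_add, hp, hq]

lemma weight_le_totalDegree_aeval {φ : τ → MvPolynomial σ R} {w : τ → ℕ}
    (hφ : ∀ i, (φ i).IsHomogeneous (w i)) (hind : AlgebraicIndependent R φ)
    {g : MvPolynomial τ R} {t : τ →₀ ℕ} (ht : t ∈ g.support) :
    Finsupp.weight w t ≤ (aeval φ g).totalDegree := by
  by_contra! hlt
  have hcomp := homogeneousComponent_eq_zero _ _ hlt
  rw [homogeneousComponent_aeval hφ, map_eq_zero_iff _ hind] at hcomp
  have hcoeff := congrArg (coeff t) hcomp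
  classical
  rw [coeff_weightedHomogeneousComponent, if_pos rfl, coeff_zero] at hcoeff
  exact mem_support_iff.mp ht hcoeff

lemma le_totalDegree_aeval_of_mem_vars {φ : τ → MvPolynomial σ R} {w : τ → ℕ}
    (hφ : ∀ i, (φ i).IsHomogeneous (w i)) (hind : AlgebraicIndependent R φ)
    {g : MvPolynomial τ R} {i : τ} (hi : i ∈ g.vars) :
    w i ≤ (aeval φ g).totalDegree := by
  obtain ⟨t, ht, hti⟩ := (mem_vars_iff_mem_support i).mp hi
  exact (Finsupp.le_weight_of_ne_zero' w (Finsupp.mem_support_iff.mp hti)).trans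
    (weight_le_totalDegree_aeval hφ hind ht)

variable (σ R) in
lemma isHomogeneous_esymm [Fintype σ] (k : ℕ) : (esymm σ R k).IsHomogeneous k := by
  refine IsHomogeneous.sum _ _ _ fun s hs => ?_
  simpa only [Pi.one_apply, Finset.sum_const, smul_eq_mul, mul_one,
    (Finset.mem_powersetCard.mp hs).2] using
    IsHomogeneous.prod s (X : σ → MvPolynomial σ R) 1 fun i _ => isHomogeneous_X R i

variable (R) in
lemma algebraicIndependent_esymm (n : ℕ) :
    AlgebraicIndependent R fun i : Fin n => esymm (Fin n) R (i + 1) := by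
  intro p q hpq
  refine (esymmAlgHom_fin_bijective R n).1 (Subtype.ext ?_)
  rw [esymmAlgHom_apply, esymmAlgHom_apply]
  exact hpq

lemma eval_eq_of_eval_esymm_eq {n d : ℕ} {f : MvPolynomial (Fin n) R} (hf : f.IsSymmetric)
    (hd : f.totalDegree ≤ d) {x y : Fin n → R}
    (h : ∀ k ≤ d, eval x (esymm (Fin n) R k) = eval y (esymm (Fin n) R k)) :
    eval x f = eval y f := by
  obtain ⟨g, hg⟩ := (esymmAlgHom_fin_bijective R n).2 ⟨f, hf⟩
  have hgf : aeval (fun i : Fin n => esymm (Fin n) R (i + 1)) g = f := by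
    rw [← esymmAlgHom_apply, hg]
  have heval (z : Fin n → R) :
      eval z f = eval (fun i : Fin n => eval z (esymm (Fin n) R (i + 1))) g := by
    rw [← hgf, ← coe_aeval_eq_eval]
    exact comp_aeval_apply _ (aeval z) g
  rw [heval, heval]
  refine eval₂Hom_congr' rfl (fun i hi _ => h _ (le_trans ?_ hd)) rfl
  rw [← hgf]
  exact le_totalDegree_aeval_of_mem_vars (fun i : Fin n => isHomogeneous_esymm (Fin n) R (i + 1))
    (algebraicIndependent_esymm R n) hi

variable [Fintype σ] {x y : σ → R}

lemma sum_pow_sub_sum_pow {k : ℕ} (hk : 0 < k)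
    (hesymm : ∀ j < k, eval x (esymm σ R j) = eval y (esymm σ R j))
    (hpow : ∀ j, 1 ≤ j → j < k → ∑ i, x i ^ j = ∑ i, y i ^ j) :
    ∑ i, x i ^ k - ∑ i, y i ^ k =
      (-1) ^ (k + 1) * k * (eval x (esymm σ R k) - eval y (esymm σ R k)) := by
  have newton (z : σ → R) := congrArg (eval z) (psum_eq_mul_esymm_sub_sum σ R k hk)
  simp only [map_mul, map_natCast, map_pow, map_neg, map_one, map_sub, map_sum, psum, eval_X]
    at newton
  have hlower : ∑ a ∈ Finset.HasAntidiagonal.antidiagonal k with a.1 ∈ Set.Ioo 0 k,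
      (-1) ^ a.1 * eval x (esymm σ R a.1) * ∑ i, x i ^ a.2 =
      ∑ a ∈ Finset.HasAntidiagonal.antidiagonal k with a.1 ∈ Set.Ioo 0 k,
      (-1) ^ a.1 * eval y (esymm σ R a.1) * ∑ i, y i ^ a.2 := by
    refine Finset.sum_congr rfl fun a ha => ?_
    simp only [Finset.mem_filter, Finset.HasAntidiagonal.mem_antidiagonal, Set.mem_Ioo] at ha
    rw [hesymm a.1 (by lia), hpow a.2 (by lia) (by lia)]
  rw [newton x, newton y, hlower]
  ring

lemma sum_pow_eq_of_eval_esymm_eq {d : ℕ}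
    (h : ∀ k ≤ d, eval x (esymm σ R k) = eval y (esymm σ R k)) :
    ∀ k, 1 ≤ k → k ≤ d → ∑ i, x i ^ k = ∑ i, y i ^ k := by
  intro k
  induction k using Nat.strong_induction_on with
  | _ k ih =>
    intro hk hkd
    have hsub := sum_pow_sub_sum_pow hk (fun j hj => h j (by lia))
      fun j hj hjk => ih j hjk hj (by lia)
    rwa [h k hkd, sub_self, mul_zero, sub_eq_zero] at hsub

lemma eval_esymm_eq_of_sum_pow_eq [NoZeroDivisors R] [CharZero R] {d : ℕ}
    (h : ∀ k, 1 ≤ k → k ≤ d → ∑ i, x i ^ k = ∑ i, y i ^ k) :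
    ∀ k ≤ d, eval x (esymm σ R k) = eval y (esymm σ R k) := by
  intro k
  induction k using Nat.strong_induction_on with
  | _ k ih =>
    intro hkd
    rcases Nat.eq_zero_or_pos k with rfl | hk
    · simp only [esymm_zero, map_one]
    have hsub := sum_pow_sub_sum_pow hk (fun j hj => ih j hj (by lia))
      fun j hj hjk => h j hj (by lia)
    rw [h k hk hkd, sub_self, eq_comm] at hsub
    have hcoeff : (-1 : R) ^ (k + 1) * k ≠ 0 := by simp [hk.ne']
    exact sub_eq_zero.mp ((mul_eq_zero.mp hsub).resolve_left hcoeff)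

lemma eval_eq_of_sum_pow_eq [NoZeroDivisors R] [CharZero R] {n d : ℕ}
    {f : MvPolynomial (Fin n) R} (hf : f.IsSymmetric) (hd : f.totalDegree ≤ d) {x y : Fin n → R}
    (h : ∀ k, 1 ≤ k → k ≤ d → ∑ i, x i ^ k = ∑ i, y i ^ k) : eval x f = eval y f :=
  eval_eq_of_eval_esymm_eq hf hd (eval_esymm_eq_of_sum_pow_eq h)

end SymmetricPolynomials

section RealRootedPolynomials

open Polynomial Filter Topology

lemma splits_of_alternating_eval {m : ℕ} {W : ℝ[X]} (hdeg : W.natDegree ≤ m)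
    {w : Fin (m + 1) → ℝ} (hw : StrictAnti w)
    (hsign : ∀ j : Fin (m + 1), 0 < (-1) ^ (j : ℕ) * W.eval (w j)) :
    W.Splits := by
  have hW : W ≠ 0 := by
    rintro rfl
    simpa only [eval_zero, mul_zero, lt_irrefl] using hsign 0
  have hroot (j : Fin m) : ∃ r ∈ Set.Ioo (w j.succ) (w j.castSucc), W.eval r = 0 := by
    have hsucc := hsign j.succ
    rw [Fin.val_succ, pow_succ, mul_neg_one, neg_mul, Left.neg_pos_iff] at hsucc
    obtain ⟨r, hr, hr0⟩ := intermediate_value_Ioo (hw j.castSucc_lt_succ).le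
      (f := fun t => (-1) ^ (j : ℕ) * W.eval t) (by fun_prop) ⟨hsucc, hsign j.castSucc⟩
    exact ⟨r, hr, by simpa using hr0⟩
  choose r hr hr0 using hroot
  have hanti : StrictAnti r := fun i j hij =>
    calc r j < w j.castSucc := (hr j).2
      _ ≤ w i.succ := hw.antitone (Fin.succ_le_castSucc_iff.mpr hij)
      _ < r i := (hr i).1
  refine splits_iff_card_roots.mpr (le_antisymm W.card_roots' (hdeg.trans ?_))
  calc m = (Finset.univ.image r).card := by
        rw [Finset.card_image_of_injective _ hanti.injective, Finset.card_fin]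
    _ ≤ W.roots.toFinset.card := Finset.card_le_card fun t ht => by
        obtain ⟨j, -, rfl⟩ := Finset.mem_image.mp ht
        exact Multiset.mem_toFinset.mpr ((mem_roots hW).mpr (hr0 j))
    _ ≤ W.roots.card := W.roots.toFinset_card_le

section Interlacing

variable {R : Type*} [CommRing R] [LinearOrder R] [IsStrictOrderedRing R]

lemma neg_one_pow_mul_prod_sub_pos {m : ℕ} {u : Fin m → R} {t : R} (j : Fin m)
    (hle : ∀ i ≤ j, t < u i) (hgt : ∀ i, j < i → u i < t) :
    0 < (-1) ^ ((j : ℕ) + 1) * ∏ i, (t - u i) := by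
  have hpow : (-1 : R) ^ ((j : ℕ) + 1) = ∏ i, if i ≤ j then -1 else 1 := by
    rw [Finset.prod_ite, Finset.prod_const, Finset.prod_const_one, mul_one,
      Finset.filter_ge_eq_Iic, Fin.card_Iic]
  rw [hpow, ← Finset.prod_mul_distrib]
  refine Finset.prod_pos fun i _ => ?_
  split_ifs with hij
  · linarith [hle i hij]
  · linarith [hgt i (not_le.mp hij)]

variable {d : ℕ} {u z : Fin (d + 1) → R}

lemma strictAnti_vecCons_min (hu : Antitone u) (hz : Antitone z)
    (h : ∀ j : Fin (d + 1), (-1) ^ (j : ℕ) * (z j - u j) < 0) :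
    StrictAnti (Matrix.vecCons (u 0) fun j => min (u j) (z j)) := by
  refine strictAnti_vecCons.mpr ⟨min_lt_of_right_lt (by simpa using h 0), ?_⟩
  refine Fin.strictAnti_iff_succ_lt.mpr fun j => ?_
  have hj := h j.castSucc
  have hj' := h j.succ
  have huj := hu j.castSucc_lt_succ.le
  have hzj := hz j.castSucc_lt_succ.le
  simp only [Fin.val_succ, Fin.val_castSucc, pow_succ] at hj hj'
  rcases neg_one_pow_eq_or R (j : ℕ) with hs | hs <;> rw [hs] at hj hj'
  · exact (min_le_left _ _).trans_lt (lt_min (by linarith) (by linarith))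
  · exact (min_le_right _ _).trans_lt (lt_min (by linarith) (by linarith))

lemma prod_sub_neg_of_even (hu : Antitone u) (hz : Antitone z)
    (h : ∀ j : Fin (d + 1), (-1) ^ (j : ℕ) * (z j - u j) < 0) {j : Fin (d + 1)}
    (hj : Even (j : ℕ)) : ∏ i, (z j - u i) < 0 := by
  have hzu : z j < u j := by simpa [hj.neg_one_pow] using h j
  have hpos := neg_one_pow_mul_prod_sub_pos j (t := z j) (fun i hi => hzu.trans_le (hu hi))
    fun i hi => ?_
  · simpa [hj.add_one.neg_one_pow] using hpos
  have hk : (j : ℕ) + 1 < d + 1 := by lia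
  have huz : u ⟨j + 1, hk⟩ < z ⟨j + 1, hk⟩ := by
    simpa [hj.add_one.neg_one_pow] using h ⟨j + 1, hk⟩
  calc u i ≤ u ⟨j + 1, hk⟩ := hu (Fin.mk_le_of_le_val hi)
    _ < z ⟨j + 1, hk⟩ := huz
    _ ≤ z j := hz (Fin.le_def.mpr (Nat.le_succ _))

end Interlacing

lemma eventually_splits_prod_X_sub_C_add_C {d : ℕ} {u z : Fin (d + 1) → ℝ}
    (hu : Antitone u) (hz : Antitone z)
    (h : ∀ j : Fin (d + 1), (-1) ^ (j : ℕ) * (z j - u j) < 0) :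
    ∀ᶠ ε in 𝓝[>] 0, (∏ j, (X - C (u j)) + C ε).Splits := by
  have heval (t ε : ℝ) : (∏ j, (X - C (u j)) + C ε).eval t = ∏ j, (t - u j) + ε := by
    simp only [eval_add, eval_prod, eval_sub, eval_X, eval_C]
  -- The value at the sample point is `ε` if it is the root `u j`, and negative for small `ε` if it
  -- is `z j`.
  have hsample (j : Fin (d + 1)) : ∀ᶠ ε in 𝓝[>] (0 : ℝ),
      0 < (-1) ^ ((j : ℕ) + 1) * (∏ i, (min (u j) (z j) - u i) + ε) := by
    rcases Nat.even_or_odd (j : ℕ) with hj | hj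
    · have hzu : z j < u j := by simpa [hj.neg_one_pow] using h j
      have hneg := prod_sub_neg_of_even hu hz h hj
      filter_upwards [nhdsWithin_le_nhds (eventually_lt_nhds (neg_pos.mpr hneg))] with ε hε
      rw [min_eq_right hzu.le, hj.add_one.neg_one_pow]
      linarith
    · have huz : u j < z j := by simpa [hj.neg_one_pow] using h j
      filter_upwards [self_mem_nhdsWithin] with ε hε
      rw [min_eq_left huz.le, Finset.prod_eq_zero (Finset.mem_univ j) (sub_self _), zero_add,
        hj.add_one.neg_one_pow, one_mul]
      exact hε
  filter_upwards [eventually_all.mpr hsample, self_mem_nhdsWithin] with ε hsample hε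
  refine splits_of_alternating_eval (m := d + 1) ?_ (strictAnti_vecCons_min hu hz h)
    (Fin.cases ?_ fun j => ?_)
  · rw [natDegree_add_C, natDegree_finsetProd_X_sub_C_eq_card, Finset.card_fin]
  · rw [heval, Matrix.cons_val_zero, Finset.prod_eq_zero (Finset.mem_univ 0) (sub_self _)]
    simpa using hε
  · rw [heval, Matrix.cons_val_succ, Fin.val_succ]
    exact hsample j

section SortedRoots

variable {R : Type*} [CommRing R] [IsDomain R]

lemma roots_prod_X_sub_C_comp {ι : Type*} [Fintype ι] (x : ι → R) :
    (∏ i, (X - C (x i))).roots = Finset.univ.val.map x := by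
  simpa only [Finset.prod, Multiset.map_map, Function.comp_def] using
    roots_multiset_prod_X_sub_C (Finset.univ.val.map x)

variable [LinearOrder R]

lemma exists_monotone_prod_X_sub_C_eq {n : ℕ} {P : R[X]} (hmonic : P.Monic) (hP : P.Splits)
    (hdeg : P.natDegree = n) : ∃ v : Fin n → R, Monotone v ∧ ∏ i, (X - C (v i)) = P := by
  have hlen : (P.roots.sort (· ≤ ·)).length = n := by
    rw [Multiset.length_sort, ← hP.natDegree_eq_card_roots, hdeg]
  subst hlen
  refine ⟨(P.roots.sort (· ≤ ·)).get,
    (List.sortedLE_iff_pairwise.mpr (P.roots.pairwise_sort (· ≤ ·))).monotone_get, ?_⟩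
  calc ∏ i, (X - C ((P.roots.sort (· ≤ ·)).get i))
      = ((P.roots.sort (· ≤ ·)).map fun a => X - C a).prod :=
        Fin.prod_univ_fun_getElem (P.roots.sort (· ≤ ·)) fun a => X - C a
    _ = (P.roots.map fun a => X - C a).prod := by
        rw [← Multiset.prod_coe, ← Multiset.map_coe, Multiset.sort_eq]
    _ = P := (hP.eq_prod_roots_of_monic hmonic).symm

lemma exists_monotone_prod_X_sub_C_eq_add {n : ℕ} {x : Fin n → R} {K : R[X]}
    (hK : K.natDegree < n) {ε : R} (h : (∏ i, (X - C (x i)) + C ε * K).Splits) :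
    ∃ v : Fin n → R, Monotone v ∧ ∏ i, (X - C (v i)) = ∏ i, (X - C (x i)) + C ε * K := by
  have hdeg : (∏ i, (X - C (x i))).natDegree = n := by
    rw [natDegree_finsetProd_X_sub_C_eq_card, Finset.card_fin]
  have hlt : (C ε * K).natDegree < (∏ i, (X - C (x i))).natDegree :=
    (natDegree_C_mul_le ε K).trans_lt (hK.trans_eq hdeg.symm)
  exact exists_monotone_prod_X_sub_C_eq
    ((monic_prod_X_sub_C x _).add_of_left (degree_lt_degree hlt)) h
    ((natDegree_add_eq_left_of_natDegree_lt hlt).trans hdeg)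

lemma eq_of_prod_X_sub_C_eq {n : ℕ} {x y : Fin n → R} (hx : Monotone x) (hy : Monotone y)
    (h : ∏ i, (X - C (x i)) = ∏ i, (X - C (y i))) : x = y := by
  have hmap : Finset.univ.val.map x = Finset.univ.val.map y := by
    rw [← roots_prod_X_sub_C_comp, h, roots_prod_X_sub_C_comp]
  have hperm : (List.ofFn x).Perm (List.ofFn y) := by
    rwa [← Multiset.coe_eq_coe, ← Fin.univ_val_map, ← Fin.univ_val_map]
  exact List.ofFn_injective
    (hperm.eq_of_pairwise' hx.sortedLE_ofFn.pairwise hy.sortedLE_ofFn.pairwise)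

end SortedRoots

section Perturbation

variable {σ R : Type*} [Fintype σ] [CommRing R]

lemma coeff_prod_X_sub_C (x : σ → R) {k : ℕ} (hk : k ≤ Fintype.card σ) :
    (∏ i, (X - C (x i))).coeff (Fintype.card σ - k) =
      (-1) ^ k * MvPolynomial.eval x (MvPolynomial.esymm σ R k) := by
  have h := Multiset.prod_X_sub_C_coeff (Finset.univ.val.map x) (k := Fintype.card σ - k) (by simp)
  simp only [Multiset.card_map, Finset.card_val, Finset.card_univ, Nat.sub_sub_self hk,
    Multiset.map_map, Function.comp_def] at h
  rwa [← MvPolynomial.aeval_esymm_eq_multiset_esymm σ R, MvPolynomial.aeval_eq_eval] at h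

variable {d : ℕ} {x v : σ → R} {ε : R} {K : R[X]}

lemma eval_esymm_eq_of_prod_X_sub_C_eq_add (hdeg : K.natDegree + (d + 1) = Fintype.card σ)
    (h : ∏ i, (X - C (v i)) = ∏ i, (X - C (x i)) + C ε * K) :
    ∀ k ≤ d, MvPolynomial.eval v (MvPolynomial.esymm σ R k) =
      MvPolynomial.eval x (MvPolynomial.esymm σ R k) := by
  intro k hk
  have hcoeff := congrArg (coeff · (Fintype.card σ - k)) h
  simp only [coeff_add, coeff_C_mul, coeff_prod_X_sub_C _ (show k ≤ Fintype.card σ by lia),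
    coeff_eq_zero_of_natDegree_lt (show K.natDegree < Fintype.card σ - k by lia), mul_zero,
    add_zero] at hcoeff
  exact (isUnit_one.neg.pow k).mul_left_cancel hcoeff

lemma sum_pow_eq_of_prod_X_sub_C_eq_add (hdeg : K.natDegree + (d + 1) = Fintype.card σ)
    (h : ∏ i, (X - C (v i)) = ∏ i, (X - C (x i)) + C ε * K) :
    ∀ k, 1 ≤ k → k ≤ d → ∑ i, v i ^ k = ∑ i, x i ^ k :=
  sum_pow_eq_of_eval_esymm_eq (eval_esymm_eq_of_prod_X_sub_C_eq_add hdeg h)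

lemma sum_pow_succ_of_prod_X_sub_C_eq_add (hK : K.Monic)
    (hdeg : K.natDegree + (d + 1) = Fintype.card σ)
    (h : ∏ i, (X - C (v i)) = ∏ i, (X - C (x i)) + C ε * K) :
    ∑ i, v i ^ (d + 1) = ∑ i, x i ^ (d + 1) - (d + 1) * ε := by
  have hcoeff := congrArg (coeff · (Fintype.card σ - (d + 1))) h
  simp only [coeff_add, coeff_C_mul,
    coeff_prod_X_sub_C _ (show d + 1 ≤ Fintype.card σ by lia)] at hcoeff
  rw [show Fintype.card σ - (d + 1) = K.natDegree by lia, hK.coeff_natDegree] at hcoeff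
  have hsub := sum_pow_sub_sum_pow (x := v) (y := x) (k := d + 1) d.succ_pos
    (fun j hj => eval_esymm_eq_of_prod_X_sub_C_eq_add hdeg h j (Nat.lt_succ_iff.mp hj))
    fun j hj hjd => sum_pow_eq_of_prod_X_sub_C_eq_add hdeg h j hj (Nat.lt_succ_iff.mp hjd)
  push_cast at hsub
  linear_combination hsub - (d + 1) * hcoeff

end Perturbation

end RealRootedPolynomials

section SignAlternation

open Polynomial Filter Topology

/-- The sign of `y - x` alternates along the decreasing sequence of indices `s`, starting with a
negative sign at the largest index. -/
structure Alternates {ι : Type*} [Preorder ι] {m : ℕ} (x y : ι → ℝ) (s : Fin m → ι) : Prop where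
  strictAnti : StrictAnti s
  sign : ∀ j : Fin m, (-1) ^ (j : ℕ) * (y (s j) - x (s j)) < 0

/-- The sign of the monic polynomial `g` agrees with that of `y i - x i` between `x i` and `y i`,
for every `i ∈ I`. Nonnegativity to the right of all these intervals is included to make the notion
suitable for induction on the number of roots of `g`. -/
structure IsSignAdapted {ι : Type*} (I : Finset ι) (x y : ι → ℝ) (g : ℝ[X]) : Prop where
  monic : g.Monic
  eval_nonneg : ∀ t, (∀ i ∈ I, max (x i) (y i) ≤ t) → 0 ≤ g.eval t
  sub_mul_eval_nonneg : ∀ i ∈ I, ∀ t ∈ Set.uIcc (x i) (y i), 0 ≤ (y i - x i) * g.eval t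

lemma isSignAdapted_one {ι : Type*} {I : Finset ι} {x y : ι → ℝ}
    (h : ∀ i ∈ I, x i ≤ y i) : IsSignAdapted I x y 1 where
  monic := monic_one
  eval_nonneg _ _ := by simp only [eval_one, zero_le_one]
  sub_mul_eval_nonneg i hi _ _ := by
    simpa only [eval_one, mul_one, sub_nonneg] using h i hi

variable {ι : Type*} [LinearOrder ι] {I : Finset ι} {x y : ι → ℝ}

lemma Alternates.vecCons {m : ℕ} {s : Fin m → ι} {k : ι} (hs : Alternates y x s)
    (hk : y k < x k) (hsk : ∀ j, s j ≤ k) : Alternates x y (Matrix.vecCons k s) where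
  strictAnti := by
    cases m with
    | zero => exact Subsingleton.strictAnti _
    | succ m =>
      have hxy : x (s 0) < y (s 0) := by simpa using hs.sign 0
      have hne : s 0 ≠ k := by
        rintro rfl
        exact hk.not_gt hxy
      exact strictAnti_vecCons.mpr ⟨(hsk 0).lt_of_ne hne, hs.strictAnti⟩
  sign := Fin.cases (by simpa using hk) fun j => by
    have hj := hs.sign j
    rw [Matrix.cons_val_succ, Fin.val_succ, pow_succ]
    linarith

lemma IsSignAdapted.X_sub_C_mul {g : ℝ[X]} {k : ι} (hx : Monotone x) (hy : Monotone y)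
    (hk : k ∈ I) (hyx : y k < x k) (hlast : ∀ i ∈ I, k < i → x i ≤ y i)
    (hg : IsSignAdapted {i ∈ I | i ≤ k} y x g) : IsSignAdapted I x y ((X - C (x k)) * g) where
  monic := (monic_X_sub_C _).mul hg.monic
  eval_nonneg t ht := by
    rw [eval_mul, eval_sub, eval_X, eval_C]
    refine mul_nonneg (sub_nonneg.mpr (le_of_max_le_left (ht k hk))) (hg.eval_nonneg t ?_)
    intro i hi
    rw [max_comm]
    exact ht i (Finset.mem_filter.mp hi).1
  sub_mul_eval_nonneg i hi t ht := by
    rw [eval_mul, eval_sub, eval_X, eval_C]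
    rcases le_or_gt i k with hik | hki
    · have hgi := hg.sub_mul_eval_nonneg i (Finset.mem_filter.mpr ⟨hi, hik⟩) t
        (Set.uIcc_comm (x i) (y i) ▸ ht)
      have htk : t ≤ x k := ht.2.trans (max_le (hx hik) ((hy hik).trans hyx.le))
      calc 0 ≤ (x i - y i) * g.eval t * (x k - t) := mul_nonneg hgi (sub_nonneg.mpr htk)
        _ = (y i - x i) * ((t - x k) * g.eval t) := by ring
    · have hxy := hlast i hi hki
      rw [Set.uIcc_of_le hxy] at ht
      have hkt : x k ≤ t := (hx hki.le).trans ht.1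
      refine mul_nonneg (sub_nonneg.mpr hxy) (mul_nonneg (sub_nonneg.mpr hkt) ?_)
      refine hg.eval_nonneg t fun i' hi' => ?_
      have hi'k := (Finset.mem_filter.mp hi').2
      exact max_le (((hy hi'k).trans hyx.le).trans hkt) ((hx hi'k).trans hkt)

theorem exists_alternates_or_isSignAdapted (m : ℕ) {x y : ι → ℝ} (hx : Monotone x)
    (hy : Monotone y) (I : Finset ι) :
    (∃ s : Fin m → ι, Alternates x y s ∧ ∀ j, s j ∈ I) ∨
      ∃ g, IsSignAdapted I x y g ∧ g.natDegree < m := by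
  induction m generalizing x y I with
  | zero =>
    exact Or.inl ⟨Fin.elim0, ⟨Subsingleton.strictAnti _, fun j => j.elim0⟩, fun j => j.elim0⟩
  | succ m ih =>
    rcases Finset.eq_empty_or_nonempty {i ∈ I | y i < x i} with hempty | hne
    · have hxy : ∀ i ∈ I, x i ≤ y i := fun i hi =>
        not_lt.mp (Finset.filter_eq_empty_iff.mp hempty hi)
      exact Or.inr ⟨1, isSignAdapted_one hxy, by simp⟩
    obtain ⟨hk, hyx⟩ := Finset.mem_filter.mp (Finset.max'_mem _ hne)
    set k := Finset.max' {i ∈ I | y i < x i} hne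
    have hlast : ∀ i ∈ I, k < i → x i ≤ y i := fun i hi hki => by
      by_contra! hlt
      exact hki.not_ge (Finset.le_max' _ _ (Finset.mem_filter.mpr ⟨hi, hlt⟩))
    rcases ih hy hx {i ∈ I | i ≤ k} with ⟨s, hs, hsI⟩ | ⟨g, hg, hdeg⟩
    · refine Or.inl ⟨_, hs.vecCons hyx fun j => (Finset.mem_filter.mp (hsI j)).2, ?_⟩
      exact Fin.cases hk fun j => (Finset.mem_filter.mp (hsI j)).1
    · refine Or.inr ⟨_, hg.X_sub_C_mul hx hy hk hyx hlast, ?_⟩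
      rw [(monic_X_sub_C _).natDegree_mul hg.monic, natDegree_X_sub_C]
      lia

lemma integral_eval_pos_of_nonneg {g : ℝ[X]} (hg : g ≠ 0) {a b : ℝ} (hab : a < b)
    (h : ∀ t ∈ Set.Icc a b, 0 ≤ g.eval t) : 0 < ∫ t in a..b, g.eval t := by
  have hne : ∃ t ∈ Set.Icc a b, g.eval t ≠ 0 := by
    by_contra! hzero
    exact hg (eq_zero_of_infinite_isRoot g ((Set.Icc_infinite hab).mono hzero))
  obtain ⟨t, ht, hgt⟩ := hne
  exact intervalIntegral.integral_pos hab g.continuous.continuousOn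
    (fun t ht => h t (Set.Ioc_subset_Icc_self ht)) ⟨t, ht, (h t ht).lt_of_ne' hgt⟩

lemma integral_eval_pos {g : ℝ[X]} (hg : g ≠ 0) {a b : ℝ} (hab : a ≠ b)
    (h : ∀ t ∈ Set.uIcc a b, 0 ≤ (b - a) * g.eval t) : 0 < ∫ t in a..b, g.eval t := by
  rcases hab.lt_or_gt with hlt | hlt
  · exact integral_eval_pos_of_nonneg hg hlt fun t ht =>
      nonneg_of_mul_nonneg_right (h t (Set.Icc_subset_uIcc ht)) (sub_pos.mpr hlt)
  · have hpos := integral_eval_pos_of_nonneg (neg_ne_zero.mpr hg) hlt fun t ht => by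
      rw [eval_neg, neg_nonneg]
      exact nonpos_of_mul_nonneg_right (h t (Set.Icc_subset_uIcc' ht)) (sub_neg.mpr hlt)
    simpa only [eval_neg, intervalIntegral.integral_neg, ← intervalIntegral.integral_symm]
      using hpos

lemma integral_eval (g : ℝ[X]) (a b : ℝ) :
    ∫ t in a..b, g.eval t = ∑ k ∈ Finset.range (g.natDegree + 1),
      g.coeff k * ((b ^ (k + 1) - a ^ (k + 1)) / (k + 1)) := by
  simp_rw [eval_eq_sum_range]
  rw [intervalIntegral.integral_finsetSum fun k _ =>
    (by fun_prop : Continuous fun t : ℝ => g.coeff k * t ^ k).intervalIntegrable _ _]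
  simp only [intervalIntegral.integral_const_mul, integral_pow]

lemma sum_integral_eval_nonpos {σ : Type*} [Fintype σ] {d : ℕ} {g : ℝ[X]} (hg : g.Monic)
    (hdeg : g.natDegree ≤ d) {x y : σ → ℝ} (h : ∀ k, 1 ≤ k → k ≤ d → ∑ i, y i ^ k = ∑ i, x i ^ k)
    (hle : ∑ i, y i ^ (d + 1) ≤ ∑ i, x i ^ (d + 1)) :
    ∑ i, ∫ t in x i..y i, g.eval t ≤ 0 := by
  simp only [integral_eval]
  rw [Finset.sum_comm]
  refine Finset.sum_nonpos fun k hk => ?_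
  have hkg : k ≤ g.natDegree := Nat.lt_succ_iff.mp (Finset.mem_range.mp hk)
  rw [← Finset.mul_sum, ← Finset.sum_div, Finset.sum_sub_distrib]
  rcases (hkg.trans hdeg).lt_or_eq with hkd | rfl
  · rw [h (k + 1) k.succ_pos hkd, sub_self, zero_div, mul_zero]
  · rw [le_antisymm hkg hdeg, hg.coeff_natDegree, one_mul, ← le_antisymm hkg hdeg]
    exact div_nonpos_of_nonpos_of_nonneg (sub_nonpos.mpr hle) (by positivity)

theorem exists_alternates {ι : Type*} [LinearOrder ι] [Fintype ι] {d : ℕ} {x y : ι → ℝ}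
    (hx : Monotone x) (hy : Monotone y) (hne : x ≠ y)
    (h : ∀ k, 1 ≤ k → k ≤ d → ∑ i, y i ^ k = ∑ i, x i ^ k)
    (hle : ∑ i, y i ^ (d + 1) ≤ ∑ i, x i ^ (d + 1)) :
    ∃ s : Fin (d + 1) → ι, Alternates x y s := by
  rcases exists_alternates_or_isSignAdapted (d + 1) hx hy Finset.univ with
    ⟨s, hs, -⟩ | ⟨g, hg, hdeg⟩
  · exact ⟨s, hs⟩
  have hpos (i : ι) (hi : x i ≠ y i) : 0 < ∫ t in x i..y i, g.eval t :=
    integral_eval_pos hg.monic.ne_zero hi (hg.sub_mul_eval_nonneg i (Finset.mem_univ i))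
  have hnonneg (i : ι) : 0 ≤ ∫ t in x i..y i, g.eval t := by
    rcases eq_or_ne (x i) (y i) with hi | hi
    · rw [hi, intervalIntegral.integral_same]
    · exact (hpos i hi).le
  obtain ⟨i, hi⟩ := Function.ne_iff.mp hne
  have hsum := Finset.sum_pos' (fun i _ => hnonneg i) ⟨i, Finset.mem_univ i, hpos i hi⟩
  exact absurd (sum_integral_eval_nonpos hg.monic (Nat.lt_succ_iff.mp hdeg) h hle) hsum.not_ge

lemma Alternates.eventually_splits {ι : Type*} [LinearOrder ι] [Fintype ι] {d : ℕ} {x y : ι → ℝ}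
    (hx : Monotone x) (hy : Monotone y) {s : Fin (d + 1) → ι} (hs : Alternates x y s) :
    ∀ᶠ ε in 𝓝[>] 0, (∏ i, (X - C (x i)) +
      C ε * ∏ i ∈ (Finset.univ.image s)ᶜ, (X - C (x i))).Splits := by
  have hfactor : ∏ i, (X - C (x i)) =
      (∏ j, (X - C (x (s j)))) * ∏ i ∈ (Finset.univ.image s)ᶜ, (X - C (x i)) := by
    rw [← Finset.prod_mul_prod_compl (Finset.univ.image s),
      Finset.prod_image hs.strictAnti.injective.injOn]
  filter_upwards [eventually_splits_prod_X_sub_C_add_C (hx.comp_antitone hs.strictAnti.antitone)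
    (hy.comp_antitone hs.strictAnti.antitone) hs.sign] with ε hε
  rw [hfactor, ← add_mul]
  exact hε.mul (Splits.prod fun i _ => Splits.X_sub_C (x i))

theorem exists_monic_eventually_splits {ι : Type*} [LinearOrder ι] [Fintype ι] {d : ℕ}
    {x y : ι → ℝ} (hx : Monotone x) (hy : Monotone y) (hne : x ≠ y)
    (h : ∀ k, 1 ≤ k → k ≤ d → ∑ i, y i ^ k = ∑ i, x i ^ k)
    (hle : ∑ i, y i ^ (d + 1) ≤ ∑ i, x i ^ (d + 1)) :
    ∃ K : ℝ[X], K.Monic ∧ K.natDegree + (d + 1) = Fintype.card ι ∧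
      ∀ᶠ ε in 𝓝[>] 0, (∏ i, (X - C (x i)) + C ε * K).Splits := by
  obtain ⟨s, hs⟩ := exists_alternates hx hy hne h hle
  refine ⟨_, monic_prod_X_sub_C x (Finset.univ.image s)ᶜ, ?_, hs.eventually_splits hx hy⟩
  rw [natDegree_finsetProd_X_sub_C_eq_card, ← Finset.card_compl_add_card (Finset.univ.image s),
    Finset.card_image_of_injective _ hs.strictAnti.injective, Finset.card_fin]

end SignAlternation

section Topology

open Filter Topology

lemma tendsto_of_tendsto_comp_of_injOn {α X Y : Type*} [TopologicalSpace X] [TopologicalSpace Y]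
    [T2Space Y] {K : Set X} (hK : IsCompact K) {Φ : X → Y} (hΦ : Continuous Φ)
    (hinj : Set.InjOn Φ K) {l : Filter α} {v : α → X} (hv : ∀ᶠ a in l, v a ∈ K) {x : X}
    (hx : x ∈ K) (hlim : Tendsto (Φ ∘ v) l (𝓝 (Φ x))) : Tendsto v l (𝓝 x) := by
  refine hK.tendsto_nhds_of_unique_mapClusterPt hv fun x' hx' hcluster => hinj hx' hx ?_
  exact eq_of_nhds_neBot ((hcluster.continuousAt_comp hΦ.continuousAt).neBot.mono
    (inf_le_inf_left _ hlim))

theorem isPreconnected_of_subsingleton_isLocalMinOn {X α : Type*} [TopologicalSpace X]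
    [LinearOrder α] [TopologicalSpace α] [ClosedIicTopology α] {K : Set X} (hK : IsCompact K)
    {f : X → α} (hf : ContinuousOn f K) (h : {x ∈ K | IsLocalMinOn f K x}.Subsingleton) :
    IsPreconnected K := by
  have exists_localMin {t t' : Set X} (ht : IsClosed t) (ht' : IsClosed t') (hK_sub : K ⊆ t ∪ t')
      (hdisj : K ∩ (t ∩ t') = ∅) (hne : (K ∩ t).Nonempty) :
      ∃ x ∈ K ∩ t, IsLocalMinOn f K x := by
    obtain ⟨x, hx, hmin⟩ := (hK.inter_right ht).exists_isMinOn hne (hf.mono Set.inter_subset_left)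
    have hxt' : x ∉ t' := fun hxt' => hdisj.subset ⟨hx.1, hx.2, hxt'⟩
    refine ⟨x, hx, ?_⟩
    filter_upwards [self_mem_nhdsWithin, nhdsWithin_le_nhds (ht'.isOpen_compl.mem_nhds hxt')]
      with v hvK hvt'
    exact hmin ⟨hvK, (hK_sub hvK).resolve_right hvt'⟩
  rw [isPreconnected_closed_iff]
  intro t t' ht ht' hsub hne hne'
  by_contra! hdisj
  obtain ⟨x, hx, hxmin⟩ := exists_localMin ht ht' hsub hdisj hne
  obtain ⟨x', hx', hxmin'⟩ := exists_localMin ht' ht (by rwa [Set.union_comm])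
    (by rwa [Set.inter_comm t' t]) hne'
  have hxx' : x = x' := h ⟨hx.1, hxmin⟩ ⟨hx'.1, hxmin'⟩
  exact hdisj.subset ⟨hx.1, hx.2, hxx' ▸ hx'.2⟩

end Topology

section WeylVandermonde

open Polynomial Filter Topology

/-- The part of a Vandermonde variety in the canonical Weyl chamber of `ℝⁿ`: the nondecreasing
vectors whose power sums `p_1, …, p_d` are `c 1, …, c d`. -/
def weylVandermonde (n d : ℕ) (c : ℕ → ℝ) : Set (Fin n → ℝ) :=
  {y | Monotone y ∧ ∀ k, 1 ≤ k → k ≤ d → ∑ i, y i ^ k = c k}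

variable {n d : ℕ} {c : ℕ → ℝ}

lemma isClosed_weylVandermonde : IsClosed (weylVandermonde n d c) := by
  simp only [weylVandermonde, Set.ofPred_and, Set.ofPred_forall]
  refine isClosed_monotone.inter ?_
  refine isClosed_iInter fun k => isClosed_iInter fun _ => isClosed_iInter fun _ => ?_
  exact isClosed_eq (by fun_prop) continuous_const

lemma isCompact_weylVandermonde (hd : 2 ≤ d) : IsCompact (weylVandermonde n d c) := by
  refine Metric.isCompact_of_isClosed_isBounded isClosed_weylVandermonde ?_
  refine Metric.isBounded_closedBall (x := 0) (r := √(c 2)) |>.subset fun y hy => ?_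
  rw [mem_closedBall_zero_iff, pi_norm_le_iff_of_nonneg (Real.sqrt_nonneg _)]
  intro i
  refine Real.abs_le_sqrt ?_
  rw [← hy.2 2 one_le_two hd]
  exact Finset.single_le_sum (f := fun i => y i ^ 2) (fun i _ => sq_nonneg _) (Finset.mem_univ i)

lemma convex_weylVandermonde (hd : d ≤ 1) : Convex ℝ (weylVandermonde n d c) := by
  intro y hy z hz a b ha hb hab
  refine ⟨(hy.1.const_mul ha).add (hz.1.const_mul hb), fun k hk hkd => ?_⟩
  obtain rfl : k = 1 := by lia
  have hysum := hy.2 1 le_rfl hkd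
  have hzsum := hz.2 1 le_rfl hkd
  simp only [pow_one] at hysum hzsum
  simp only [pow_one, Pi.add_apply, Pi.smul_apply, smul_eq_mul, Finset.sum_add_distrib,
    ← Finset.mul_sum, hysum, hzsum, ← add_mul, hab, one_mul]

lemma injOn_prod_sub_monotone :
    Set.InjOn (fun (y : Fin n → ℝ) (t : ℝ) => ∏ i, (t - y i)) {y | Monotone y} := by
  intro x hx y hy hxy
  refine eq_of_prod_X_sub_C_eq hx hy (Polynomial.funext fun t => ?_)
  simpa only [eval_prod, eval_sub, eval_X, eval_C] using congrFun hxy t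

lemma tendsto_of_prod_X_sub_C_eq_add {F : Set (Fin n → ℝ)} (hF : IsCompact F)
    (hmono : F ⊆ {y | Monotone y}) {x : Fin n → ℝ} (hx : x ∈ F) {l : Filter ℝ} (hl : l ≤ 𝓝 0)
    {v : ℝ → Fin n → ℝ} (hv : ∀ᶠ ε in l, v ε ∈ F) {K : ℝ[X]}
    (hprod : ∀ᶠ ε in l, ∏ i, (X - C (v ε i)) = ∏ i, (X - C (x i)) + C ε * K) :
    Tendsto v l (𝓝 x) := by
  refine tendsto_of_tendsto_comp_of_injOn hF (Φ := fun y t => ∏ i, (t - y i)) (by fun_prop)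
    (injOn_prod_sub_monotone.mono hmono) hv hx (tendsto_pi_nhds.mpr fun t => ?_)
  have hlim : Tendsto (fun ε => ∏ i, (t - x i) + ε * K.eval t) (𝓝 0)
      (𝓝 (∏ i, (t - x i) + 0 * K.eval t)) :=
    Continuous.tendsto (by fun_prop) 0
  rw [zero_mul, add_zero] at hlim
  refine (hlim.mono_left hl).congr' ?_
  filter_upwards [hprod] with ε hε
  simpa [eval_prod] using (congrArg (eval t) hε).symm

lemma eq_of_isLocalMinOn_weylVandermonde (hd : 2 ≤ d) {x y : Fin n → ℝ}
    (hx : x ∈ weylVandermonde n d c) (hy : y ∈ weylVandermonde n d c)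
    (hmin : IsLocalMinOn (fun v => ∑ i, v i ^ (d + 1)) (weylVandermonde n d c) x)
    (hle : ∑ i, y i ^ (d + 1) ≤ ∑ i, x i ^ (d + 1)) : x = y := by
  by_contra hne
  obtain ⟨K, hK, hdeg, hsplits⟩ := exists_monic_eventually_splits hx.1 hy.1 hne
    (fun k hk hkd => (hy.2 k hk hkd).trans (hx.2 k hk hkd).symm) hle
  have hroots : ∀ᶠ ε in 𝓝[>] (0 : ℝ), ∃ v : Fin n → ℝ, Monotone v ∧
      ∏ i, (X - C (v i)) = ∏ i, (X - C (x i)) + C ε * K := by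
    filter_upwards [hsplits] with ε hε
    exact exists_monotone_prod_X_sub_C_eq_add (by rw [Fintype.card_fin] at hdeg; lia) hε
  obtain ⟨v, hv⟩ := hroots.choice
  have hmem : ∀ᶠ ε in 𝓝[>] 0, v ε ∈ weylVandermonde n d c := by
    filter_upwards [hv] with ε ⟨hmono, hprod⟩
    exact ⟨hmono, fun k hk hkd =>
      (sum_pow_eq_of_prod_X_sub_C_eq_add hdeg hprod k hk hkd).trans (hx.2 k hk hkd)⟩
  have hlim : Tendsto v (𝓝[>] 0) (𝓝 x) :=
    tendsto_of_prod_X_sub_C_eq_add (isCompact_weylVandermonde hd) (fun y hy => hy.1) hx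
      nhdsWithin_le_nhds hmem (hv.mono fun _ h => h.2)
  have hmin' := (tendsto_nhdsWithin_iff.mpr ⟨hlim, hmem⟩).eventually hmin
  obtain ⟨ε, hminε, ⟨-, hprod⟩, hε⟩ := (hmin'.and (hv.and self_mem_nhdsWithin)).exists
  have hsum := sum_pow_succ_of_prod_X_sub_C_eq_add hK hdeg hprod
  have hpos : 0 < (d + 1) * ε := mul_pos (by positivity) hε
  linarith only [hminε, hsum, hpos]

theorem isPreconnected_weylVandermonde (n d : ℕ) (c : ℕ → ℝ) :
    IsPreconnected (weylVandermonde n d c) := by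
  rcases Nat.lt_or_ge d 2 with hd | hd
  · exact (convex_weylVandermonde (Nat.lt_succ_iff.mp hd)).isPreconnected
  refine isPreconnected_of_subsingleton_isLocalMinOn (isCompact_weylVandermonde hd)
    (f := fun y => ∑ i, y i ^ (d + 1)) (by fun_prop) ?_
  rintro x ⟨hx, hxmin⟩ y ⟨hy, hymin⟩
  rcases le_total (∑ i, y i ^ (d + 1)) (∑ i, x i ^ (d + 1)) with hle | hle
  · exact eq_of_isLocalMinOn_weylVandermonde hd hx hy hxmin hle
  · exact (eq_of_isLocalMinOn_weylVandermonde hd hy hx hymin hle).symm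

end WeylVandermonde

theorem connected_of_equal_powerSums_general {ι : Type*} {n d : ℕ}
    {f : ι → MvPolynomial (Fin n) ℝ} (hsym : ∀ i, (f i).IsSymmetric)
    (hdeg : ∀ i, (f i).totalDegree ≤ d) {A : Set (ι → ℝ)} {x z : Fin n → ℝ}
    (hx : (fun i => MvPolynomial.eval x (f i)) ∈ A) (hxW : Monotone x) (hzW : Monotone z)
    (hpz : ∀ j, 1 ≤ j → j ≤ d → ∑ i, z i ^ j = ∑ i, x i ^ j) :
    z ∈ connectedComponentIn {y | (fun i => MvPolynomial.eval y (f i)) ∈ A} x := by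
  have hconn := isPreconnected_weylVandermonde n d fun j => ∑ i, x i ^ j
  refine hconn.subset_connectedComponentIn ⟨hxW, fun _ _ _ => rfl⟩ (fun y hy => ?_) ⟨hzW, hpz⟩
  have heval : (fun i => MvPolynomial.eval y (f i)) = fun i => MvPolynomial.eval x (f i) :=
    funext fun i => eval_eq_of_sum_pow_eq (hsym i) (hdeg i) hy.2
  rwa [Set.mem_ofPred_eq, heval]

/-- If `S ⊆ ℝⁿ` is defined by symmetric polynomial inequalities
`f_1 ≥ 0, …, f_s ≥ 0` of degree at most `d ≤ n`, `x ∈ S ∩ W_c` and `z ∈ W_c`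
(where `W_c` is the canonical Weyl chamber of nondecreasing vectors) have the same
power sums `p_1, …, p_d`, then `x` and `z` lie in the same connected component of `S`. -/
theorem connected_of_equal_powerSums (n d s : ℕ) (hn : 0 < n) (hd : 0 < d) (hs : 0 < s)
    (hdn : d ≤ n) (f : Fin s → MvPolynomial (Fin n) ℝ)
    (hsym : ∀ i, (f i).IsSymmetric) (hdeg : ∀ i, (f i).totalDegree ≤ d)
    (S : Set (Fin n → ℝ)) (hS : S = {x | ∀ i, 0 ≤ MvPolynomial.eval x (f i)})
    (x z : Fin n → ℝ) (hx : x ∈ S) (hxW : Monotone x) (hzW : Monotone z)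
    (hpz : ∀ j : ℕ, 1 ≤ j → j ≤ d → ∑ i, z i ^ j = ∑ i, x i ^ j) :
    z ∈ connectedComponentIn S x := by
  subst hS
  exact connected_of_equal_powerSums_general (A := {a | ∀ i, 0 ≤ a i}) hsym hdeg hx hxW hzW hpz
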